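/- arXiv:2502.09634 — 8 statements merged into one kernel-verified Lean document; each statement's English description precedes it below -/
import Mathlib

section
/- Let (X,d) be a complete vector B-metric space with B inverse-positive, let N : X → X satisfy d(N(x),N(y)) ≤ A d(x,y) for all x,y ∈ X with A a nonnegative matrix convergent to zero, let x* be the unique fixed point of N, and let x_{k+1} = N(x_k) be the successive approximations starting from x₀ ∈ X. Then (B⁻¹ − A) d(x_k, x*) ≤ A^k d(x₀, x₁) for all k ≥ 0. If in addition the matrix B⁻¹ − A is inverse-positive, then d(x_k, x*) ≤ (B⁻¹ − A)⁻¹ A^k d(x₀, x₁) for all k ≥ 0. -/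
open Filter Matrix Topology

/-- Convergence of a sequence to a point with respect to a vector-valued distance. -/
def VConv {X : Type*} {n : ℕ} (d : X → X → Fin n → ℝ) (x : ℕ → X) (l : X) : Prop :=
  Filter.Tendsto (fun k => d (x k) l) Filter.atTop (nhds 0)

/-- Cauchy sequence with respect to a vector-valued distance. -/
def VCauchy {X : Type*} {n : ℕ} (d : X → X → Fin n → ℝ) (x : ℕ → X) : Prop :=
  Filter.Tendsto (fun p : ℕ × ℕ => d (x p.1) (x p.2)) Filter.atTop (nhds 0)

/-- Completeness: every Cauchy sequence converges. -/
def VComplete {X : Type*} {n : ℕ} (d : X → X → Fin n → ℝ) : Prop :=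
  ∀ x : ℕ → X, VCauchy d x → ∃ l, VConv d x l

/-- `d` is a vector `B`-metric on `X`. -/
def IsVectorBMetric {X : Type*} {n : ℕ} (B : Matrix (Fin n) (Fin n) ℝ)
    (d : X → X → Fin n → ℝ) : Prop :=
  (∀ u v, 0 ≤ d u v) ∧ (∀ u v, d u v = 0 ↔ u = v) ∧
  (∀ u v, d u v = d v u) ∧
  (∀ u v w, d u w ≤ B.mulVec (d u v + d v w))

/-- A matrix is positive if all its entries are nonnegative. -/
def MatPos {n : ℕ} (M : Matrix (Fin n) (Fin n) ℝ) : Prop := ∀ i j, 0 ≤ M i j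

/-- A matrix is convergent to zero if its powers tend to the zero matrix. -/
def MatConvZero {n : ℕ} (A : Matrix (Fin n) (Fin n) ℝ) : Prop :=
  Filter.Tendsto (fun k => A ^ k) Filter.atTop (nhds 0)

/-- A matrix is inverse-positive if it is invertible and its inverse is positive. -/
def InvPos {n : ℕ} (M : Matrix (Fin n) (Fin n) ℝ) : Prop :=
  IsUnit M ∧ MatPos M⁻¹

theorem matPos_mono {n : ℕ} {M : Matrix (Fin n) (Fin n) ℝ} (hM : MatPos M)
    {u v : Fin n → ℝ} (h : u ≤ v) : M.mulVec u ≤ M.mulVec v := by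
  intro i
  simp only [Matrix.mulVec, dotProduct]
  exact Finset.sum_le_sum fun j _ => mul_le_mul_of_nonneg_left (h j) (hM i j)

theorem error_estimate_inverse_positive {X : Type*} {n : ℕ} (hn : 0 < n)
    (B : Matrix (Fin n) (Fin n) ℝ) (d : X → X → Fin n → ℝ)
    (hmet : IsVectorBMetric B d) (hcomp : VComplete d)
    (hB : InvPos B)
    (N : X → X) (A : Matrix (Fin n) (Fin n) ℝ)
    (hA0 : MatPos A) (hA : MatConvZero A)
    (hcontr : ∀ x y : X, d (N x) (N y) ≤ A.mulVec (d x y))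
    (xs : X) (hfix : N xs = xs) (huniq : ∀ y : X, N y = y → y = xs)
    (x₀ : X) :
    (∀ k : ℕ, (B⁻¹ - A).mulVec (d (N^[k] x₀) xs) ≤ (A ^ k).mulVec (d x₀ (N x₀))) ∧
    (InvPos (B⁻¹ - A) →
      ∀ k : ℕ, d (N^[k] x₀) xs ≤ ((B⁻¹ - A)⁻¹ * A ^ k).mulVec (d x₀ (N x₀))) := by
  obtain ⟨-, -, -, htri⟩ := hmet
  have hiter : ∀ k : ℕ, d (N^[k] x₀) (N^[k+1] x₀) ≤ (A ^ k).mulVec (d x₀ (N x₀)) := by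
    intro k
    induction k with
    | zero => simp
    | succ k ih =>
      rw [Function.iterate_succ_apply' N k, Function.iterate_succ_apply' N (k+1), pow_succ',
        ← Matrix.mulVec_mulVec]
      exact (hcontr _ _).trans (matPos_mono hA0 ih)
  have h1 : ∀ k : ℕ,
      (B⁻¹ - A).mulVec (d (N^[k] x₀) xs) ≤ (A ^ k).mulVec (d x₀ (N x₀)) := by
    intro k
    have h := matPos_mono hB.2 (htri (N^[k] x₀) (N^[k+1] x₀) xs)
    rw [Matrix.mulVec_mulVec, Matrix.nonsing_inv_mul _ ((Matrix.isUnit_iff_isUnit_det _).1 hB.1),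
      Matrix.one_mulVec] at h
    have h2 : d (N^[k+1] x₀) xs ≤ A.mulVec (d (N^[k] x₀) xs) := by
      have := hcontr (N^[k] x₀) xs
      rwa [hfix, ← Function.iterate_succ_apply' N k] at this
    rw [Matrix.sub_mulVec, sub_le_iff_le_add]
    exact h.trans (add_le_add (hiter k) h2)
  refine ⟨h1, fun hI k => ?_⟩
  have h := matPos_mono hI.2 (h1 k)
  rwa [Matrix.mulVec_mulVec, Matrix.mulVec_mulVec,
    Matrix.nonsing_inv_mul _ ((Matrix.isUnit_iff_isUnit_det _).1 hI.1), Matrix.one_mulVec] at h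
end

section
/- Let (X,d) be a complete vector B-metric space with B positive, let N : X → X satisfy d(N(x),N(y)) ≤ A d(x,y) for all x,y ∈ X with A a nonnegative matrix convergent to zero, let x* be the unique fixed point of N, and let x_{k+1} = N(x_k) be the successive approximations starting from x₀ ∈ X. Then (I − BA) d(x_k, x*) ≤ B A^k d(x₀, x₁) for all k ≥ 0. If in addition the matrix I − BA is inverse-positive, then d(x_k, x*) ≤ (I − BA)⁻¹ B A^k d(x₀, x₁) for all k ≥ 0. -/
open Filter Matrix Topology

theorem error_estimate_positive {X : Type*} {n : ℕ} (hn : 0 < n)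
    (B : Matrix (Fin n) (Fin n) ℝ) (d : X → X → Fin n → ℝ)
    (hmet : IsVectorBMetric B d) (hcomp : VComplete d)
    (hB : MatPos B)
    (N : X → X) (A : Matrix (Fin n) (Fin n) ℝ)
    (hA0 : MatPos A) (hA : MatConvZero A)
    (hcontr : ∀ x y : X, d (N x) (N y) ≤ A.mulVec (d x y))
    (xs : X) (hfix : N xs = xs) (huniq : ∀ y : X, N y = y → y = xs)
    (x₀ : X) :
    (∀ k : ℕ, (1 - B * A).mulVec (d (N^[k] x₀) xs) ≤ (B * A ^ k).mulVec (d x₀ (N x₀))) ∧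
    (InvPos (1 - B * A) →
      ∀ k : ℕ, d (N^[k] x₀) xs ≤ ((1 - B * A)⁻¹ * B * A ^ k).mulVec (d x₀ (N x₀))) := by
  have hmono : ∀ (M : Matrix (Fin n) (Fin n) ℝ), MatPos M → ∀ u v : Fin n → ℝ, u ≤ v →
      M.mulVec u ≤ M.mulVec v := by
    intro M hM u v huv i
    simp only [Matrix.mulVec, dotProduct]
    exact Finset.sum_le_sum fun j _ => mul_le_mul_of_nonneg_left (huv j) (hM i j)
  have hstep : ∀ k : ℕ, d (N^[k] x₀) (N^[k+1] x₀) ≤ (A ^ k).mulVec (d x₀ (N x₀)) := by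
    intro k
    induction k with
    | zero => simp
    | succ k ih =>
      rw [Function.iterate_succ_apply' N (k+1), Function.iterate_succ_apply' N k, pow_succ',
        ← Matrix.mulVec_mulVec]
      rw [Function.iterate_succ_apply' N k] at ih
      exact (hcontr _ _).trans (hmono A hA0 _ _ ih)
  have h1 : ∀ k : ℕ,
      (1 - B * A).mulVec (d (N^[k] x₀) xs) ≤ (B * A ^ k).mulVec (d x₀ (N x₀)) := by
    intro k
    have h2 : d (N^[k+1] x₀) xs ≤ A.mulVec (d (N^[k] x₀) xs) := by
      have := hcontr (N^[k] x₀) xs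
      rwa [hfix, ← Function.iterate_succ_apply' N k] at this
    have h3 := (hmet.2.2.2 (N^[k] x₀) (N^[k+1] x₀) xs).trans
      (hmono B hB _ _ (add_le_add (hstep k) h2))
    rw [Matrix.mulVec_add, Matrix.mulVec_mulVec, Matrix.mulVec_mulVec] at h3
    rw [Matrix.sub_mulVec, Matrix.one_mulVec]
    exact sub_le_iff_le_add.mpr h3
  refine ⟨h1, fun hI k => ?_⟩
  have h4 := hmono _ hI.2 _ _ (h1 k)
  rwa [Matrix.mulVec_mulVec, Matrix.mulVec_mulVec,
    Matrix.nonsing_inv_mul _ ((Matrix.isUnit_iff_isUnit_det _).mp hI.1), Matrix.one_mulVec,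
    ← mul_assoc] at h4
end

section
/- (Cantor intersection lemma in vector B-metric spaces.) Let (X,d) be a complete vector B-metric space, and let (F_k)_{k≥1} be a descending sequence (F_{k+1} ⊆ F_k) of nonempty closed subsets of X. Assume that for every ε > 0 there exists k₀ ≥ 1 such that d(x,y) ≤ ε e componentwise for all x,y ∈ F_k and all k ≥ k₀, where e = (1,1,…,1) ∈ ℝⁿ. Then the intersection ∩_{k=1}^∞ F_k contains exactly one element. -/
open Filter Matrix Topology

/-- A set is closed w.r.t. `d` if it contains limits of its convergent sequences. -/
def VClosed {X : Type*} {n : ℕ} (d : X → X → Fin n → ℝ) (F : Set X) : Prop :=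
  ∀ x : ℕ → X, (∀ k, x k ∈ F) → ∀ l, VConv d x l → l ∈ F

/-- The vector metric `d` is continuous. -/
def VContinuousD {X : Type*} {n : ℕ} (d : X → X → Fin n → ℝ) : Prop :=
  ∀ (x y : ℕ → X) (a b : X), VConv d x a → VConv d y b →
    Filter.Tendsto (fun k => d (x k) (y k)) Filter.atTop (nhds (d a b))

/-- `f` is (sequentially) lower semicontinuous w.r.t. `d`, componentwise. -/
def VLSC {X : Type*} {n : ℕ} (d : X → X → Fin n → ℝ) (f : X → Fin n → ℝ) : Prop :=
  ∀ (x : ℕ → X) (l : X), VConv d x l →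
    ∀ i, f l i ≤ Filter.liminf (fun k => f (x k) i) Filter.atTop

/-- Condition (H): on every nonempty closed set, `f` has almost-infimum points. -/
def CondH {X : Type*} {n : ℕ} (d : X → X → Fin n → ℝ) (f : X → Fin n → ℝ) : Prop :=
  ∀ F : Set X, F.Nonempty → VClosed d F → ∀ ε : ℝ, 0 < ε →
    ∃ x₀ ∈ F, ∀ x ∈ F, ∀ i, f x₀ i ≤ f x i + ε

theorem cantor_intersection_vector {X : Type*} {n : ℕ} (hn : 0 < n)
    (B : Matrix (Fin n) (Fin n) ℝ) (d : X → X → Fin n → ℝ)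
    (hmet : IsVectorBMetric B d) (hcomp : VComplete d)
    (F : ℕ → Set X)
    (hne : ∀ k, (F k).Nonempty)
    (hcl : ∀ k, VClosed d (F k))
    (hdesc : ∀ k, F (k + 1) ⊆ F k)
    (hdiam : ∀ ε : ℝ, 0 < ε → ∃ k₀ : ℕ, ∀ k ≥ k₀,
      ∀ x ∈ F k, ∀ y ∈ F k, ∀ i, d x y i ≤ ε) :
    ∃! z : X, z ∈ ⋂ k, F k := by
  obtain ⟨h0, heq, hsymm, -⟩ := hmet
  have hanti : Antitone F := antitone_nat_of_succ_le hdesc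
  choose x hx using hne
  have hc : VCauchy d x := by
    unfold VCauchy
    rw [tendsto_pi_nhds]
    intro i
    rw [Metric.tendsto_atTop]
    intro ε hε
    obtain ⟨k₀, hk⟩ := hdiam (ε / 2) (by positivity)
    refine ⟨(k₀, k₀), fun p hp => ?_⟩
    have h1 := hk k₀ le_rfl _ (hanti hp.1 (hx p.1)) _ (hanti hp.2 (hx p.2)) i
    have h2 := h0 (x p.1) (x p.2) i
    simp only [Pi.zero_apply] at h2 ⊢
    rw [Real.dist_eq, sub_zero, abs_of_nonneg h2]
    linarith
  obtain ⟨l, hl⟩ := hcomp x hc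
  refine ⟨l, ?_, ?_⟩
  · refine Set.mem_iInter.2 fun k => ?_
    refine hcl k (fun j => x (j + k)) (fun j => hanti (Nat.le_add_left k j) (hx _)) l ?_
    exact hl.comp (tendsto_add_atTop_nat k)
  · intro y hy
    have hlm : ∀ k, l ∈ F k := fun k =>
      hcl k (fun j => x (j + k)) (fun j => hanti (Nat.le_add_left k j) (hx _)) l
        (hl.comp (tendsto_add_atTop_nat k))
    rw [← heq]
    funext i
    refine le_antisymm (le_of_forall_pos_le_add fun ε hε => ?_) (h0 y l i)
    obtain ⟨k₀, hk⟩ := hdiam ε hε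
    have := hk k₀ le_rfl y (Set.mem_iInter.1 hy k₀) l (hlm k₀) i
    simpa using this
end

section
/- (Weak Ekeland variational principle in vector B-metric spaces.) Let (X,d) be a complete vector B-metric space such that d is continuous, and let f : X → ℝⁿ be lower semicontinuous, bounded from below, and satisfying condition (H). Then for every x₀ ∈ X there exist a sequence (x_k) ⊂ X and a point x* ∈ X such that: x_k → x* as k → ∞; f(x*) ≤ f(x₀) − d(x*, x₀); if x ∈ X satisfies f(x*) + d(x*, x_k) ≥ f(x) + d(x, x_k) (componentwise) for all k ≥ 0, then x = x*; and moreover, if x ∈ X satisfies f(x*) ≥ f(x) + B d(x*, x) + (B − I) d(x*, x_k) (componentwise) for all k ≥ 0, then x = x*. -/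
open Filter Matrix Topology

theorem vclosed_aux {X : Type*} {n : ℕ} (d : X → X → Fin n → ℝ)
    (h0 : ∀ u, d u u = 0)
    (hdcont : VContinuousD d)
    (f : X → Fin n → ℝ) (hlsc : VLSC d f)
    (hbdd : ∃ c : Fin n → ℝ, ∀ x : X, c ≤ f x) (a : X) :
    VClosed d {y | f y + d y a ≤ f a} := by
  intro x hx l hl i
  obtain ⟨c, hc⟩ := hbdd
  have h1 := hlsc x l hl i
  have hconst : VConv d (fun _ : ℕ => a) a := by
    unfold VConv
    simp [h0]
  have h2 := tendsto_pi_nhds.1 (hdcont x (fun _ => a) l a hl hconst) i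
  have h3 : Tendsto (fun k => f a i - d (x k) a i) atTop (𝓝 (f a i - d l a i)) :=
    tendsto_const_nhds.sub h2
  have hle : ∀ k, f (x k) i ≤ f a i - d (x k) a i := by
    intro k
    have := hx k i
    simp only [Pi.add_apply] at this
    linarith
  have h4 : liminf (fun k => f (x k) i) atTop ≤ liminf (fun k => f a i - d (x k) a i) atTop := by
    refine liminf_le_liminf (Eventually.of_forall hle) ?_ ?_
    · exact isBoundedUnder_of ⟨c i, fun k => hc (x k) i⟩
    · exact h3.isBoundedUnder_le.isCoboundedUnder_ge
  rw [h3.liminf_eq] at h4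
  simp only [Pi.add_apply]
  linarith

theorem weak_ekeland_vector {X : Type*} {n : ℕ} (hn : 0 < n)
    (B : Matrix (Fin n) (Fin n) ℝ) (d : X → X → Fin n → ℝ)
    (hmet : IsVectorBMetric B d) (hcomp : VComplete d)
    (hdcont : VContinuousD d)
    (f : X → Fin n → ℝ) (hlsc : VLSC d f)
    (hbdd : ∃ c : Fin n → ℝ, ∀ x : X, c ≤ f x)
    (hH : CondH d f)
    (x₀ : X) :
    ∃ (x : ℕ → X) (xs : X),
      VConv d x xs ∧
      f xs ≤ f x₀ - d xs x₀ ∧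
      (∀ y : X, (∀ k : ℕ, f y + d y (x k) ≤ f xs + d xs (x k)) → y = xs) ∧
      (∀ y : X,
        (∀ k : ℕ, f y + B.mulVec (d xs y) + (B - 1).mulVec (d xs (x k)) ≤ f xs) →
        y = xs) := by
  obtain ⟨hnn, hz, hsymm, htri⟩ := hmet
  have h0 : ∀ u, d u u = 0 := fun u => (hz u u).2 rfl
  have hcl := vclosed_aux d h0 hdcont f hlsc hbdd
  have step : ∀ (k : ℕ) (s : {p : Set X × X // VClosed d p.1 ∧ p.2 ∈ p.1}),
      ∃ t : {p : Set X × X // VClosed d p.1 ∧ p.2 ∈ p.1},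
        t.1.1 = s.1.1 ∩ {y | f y + d y t.1.2 ≤ f t.1.2} ∧
        ∀ y ∈ s.1.1, ∀ i, f t.1.2 i ≤ f y i + 1 / ((k : ℝ) + 1) := by
    rintro k ⟨⟨F, a⟩, hF, ha⟩
    obtain ⟨b, hb, hb'⟩ := hH F ⟨a, ha⟩ hF (1 / ((k : ℝ) + 1)) (by positivity)
    refine ⟨⟨(F ∩ {y | f y + d y b ≤ f b}, b), ?_, ?_⟩, rfl, hb'⟩
    · intro x hx l hl
      exact ⟨hF x (fun k => (hx k).1) l hl, hcl b x (fun k => (hx k).2) l hl⟩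
    · refine ⟨hb, ?_⟩
      simp [h0]
  choose nx hnx1 hnx2 using step
  let S : ℕ → {p : Set X × X // VClosed d p.1 ∧ p.2 ∈ p.1} := fun k =>
    Nat.rec ⟨({y | f y + d y x₀ ≤ f x₀}, x₀), hcl x₀, by simp [h0]⟩ (fun k s => nx k s) k
  let F : ℕ → Set X := fun k => (S k).1.1
  let x : ℕ → X := fun k => (S k).1.2
  have hF0 : F 0 = {y | f y + d y (x 0) ≤ f (x 0)} := rfl
  have hx0 : x 0 = x₀ := rfl
  have hFs : ∀ k, F (k+1) = F k ∩ {y | f y + d y (x (k+1)) ≤ f (x (k+1))} :=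
    fun k => hnx1 k (S k)
  have happ : ∀ k, ∀ y ∈ F k, ∀ i, f (x (k+1)) i ≤ f y i + 1 / ((k : ℝ) + 1) :=
    fun k => hnx2 k (S k)
  have hFc : ∀ k, VClosed d (F k) := fun k => (S k).2.1
  have hxF : ∀ k, x k ∈ F k := fun k => (S k).2.2
  have hanti : Antitone F := antitone_nat_of_succ_le (fun k => by
    rw [hFs k]; exact Set.inter_subset_left)
  have hFle : ∀ k, ∀ y ∈ F k, f y + d y (x k) ≤ f (x k) := by
    intro k y hy
    cases k with
    | zero => rw [hF0] at hy; exact hy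
    | succ k => rw [hFs k] at hy; exact hy.2
  have hall : ∀ y, (∀ k, f y + d y (x k) ≤ f (x k)) → ∀ k, y ∈ F k := by
    intro y hy k
    induction k with
    | zero => rw [hF0]; exact hy 0
    | succ k ih => rw [hFs k]; exact ⟨ih, hy (k+1)⟩
  have hdist : ∀ k, ∀ y ∈ F (k+1), ∀ i, d y (x (k+1)) i ≤ 1 / ((k : ℝ) + 1) := by
    intro k y hy i
    have h1 := hFle (k+1) y hy i
    have h2 := happ k y (hanti (Nat.le_succ k) hy) i
    simp only [Pi.add_apply] at h1
    linarith
  have hcau : VCauchy d x := by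
    unfold VCauchy
    rw [tendsto_pi_nhds]
    intro i
    rw [Metric.tendsto_atTop]
    intro ε hε
    obtain ⟨N, hN⟩ := exists_nat_one_div_lt hε
    have key : ∀ p q : ℕ, N + 1 ≤ p → p ≤ q → d (x q) (x p) i < ε := by
      intro p q hp hpq
      obtain ⟨m, rfl⟩ : ∃ m, p = m + 1 := ⟨p - 1, by omega⟩
      have h1 := hdist m (x q) (hanti hpq (hxF q)) i
      have h2 : 1 / ((m : ℝ) + 1) ≤ 1 / ((N : ℝ) + 1) :=
        Nat.one_div_le_one_div (by omega)
      linarith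
    refine ⟨(N+1, N+1), ?_⟩
    rintro ⟨p, q⟩ ⟨hp, hq⟩
    simp only [Pi.zero_apply, Real.dist_eq, sub_zero]
    rw [abs_of_nonneg (hnn _ _ i)]
    rcases le_total p q with h | h
    · rw [hsymm]; exact key p q hp h
    · exact key q p hq h
  obtain ⟨xs, hxs⟩ := hcomp x hcau
  have hxsF : ∀ k, xs ∈ F k := by
    intro k
    refine hFc k (fun j => x (j + k)) (fun j => hanti (Nat.le_add_left k j) (hxF _)) xs ?_
    exact hxs.comp (tendsto_add_atTop_nat k)
  have huniq : ∀ y, (∀ k, f y + d y (x k) ≤ f xs + d xs (x k)) → y = xs := by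
    intro y hy
    have hyF := hall y (fun k => (hy k).trans (hFle k xs (hxsF k)))
    have hconv : VConv d x y := by
      unfold VConv
      rw [tendsto_pi_nhds]
      intro i
      rw [← tendsto_add_atTop_iff_nat 1]
      refine squeeze_zero (fun k => hnn _ _ i) (fun k => ?_)
        (tendsto_one_div_add_atTop_nhds_zero_nat (𝕜 := ℝ))
      rw [hsymm]
      exact hdist k y (hyF (k+1)) i
    have h := hdcont x x y xs hconv hxs
    simp only [h0] at h
    exact (hz _ _).1 (tendsto_nhds_unique h tendsto_const_nhds)
  refine ⟨x, xs, hxs, ?_, huniq, ?_⟩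
  · intro i
    have h := hFle 0 xs (hxsF 0) i
    rw [hx0] at h
    simp only [Pi.add_apply, Pi.sub_apply] at h ⊢
    linarith
  · intro y hy
    apply huniq
    intro k i
    have h1 := hy k i
    have h2 := htri y xs (x k) i
    rw [hsymm y xs, Matrix.mulVec_add] at h2
    rw [Matrix.sub_mulVec, Matrix.one_mulVec] at h1
    simp only [Pi.add_apply, Pi.sub_apply] at h1 h2 ⊢
    linarith
end

section
/- (Strong Ekeland variational principle in vector B-metric spaces.) Let (X,d) be a complete vector B-metric space such that d is continuous, and let f : X → ℝⁿ be lower semicontinuous, bounded from below, and satisfying condition (H). Then for given ε, δ > 0 and x₀ ∈ X with f(x₀) ≤ f(x) + ε e for all x ∈ X, there exist a sequence (x_k) ⊂ X and x* ∈ X such that: x_k → x* as k → ∞; f(x*) ≤ f(x₀); d(x*, x₀) ≤ δ e; if x ∈ X satisfies f(x*) + (ε/δ) d(x*, x_k) ≥ f(x) + (ε/δ) d(x, x_k) for all k ≥ 0, then x = x*; and moreover, if x ∈ X satisfies f(x*) ≥ f(x) + (ε/δ) B d(x*, x) + (ε/δ)(B − I) d(x*, x_k) for all k ≥ 0, then x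 = x*. -/
open Filter Matrix Topology

theorem slice_closed {X : Type*} {n : ℕ} (B : Matrix (Fin n) (Fin n) ℝ) (d : X → X → Fin n → ℝ)
    (hmet : IsVectorBMetric B d) (hdcont : VContinuousD d)
    (f : X → Fin n → ℝ) (hlsc : VLSC d f)
    (hbdd : ∃ c : Fin n → ℝ, ∀ x : X, c ≤ f x) (g : ℝ) (a : X) :
    VClosed d {y | ∀ i, f y i + g * d y a i ≤ f a i} := by
  intro x hx l hl i
  obtain ⟨c, hc⟩ := hbdd
  have hconst : VConv d (fun _ => a) a := by
    unfold VConv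
    simp only [(hmet.2.1 a a).2 rfl]
    exact tendsto_const_nhds
  have hd := (tendsto_pi_nhds.1 (hdcont x (fun _ => a) l a hl hconst)) i
  have h1 := hlsc x l hl i
  have h2 : Tendsto (fun k => f a i - g * d (x k) a i) atTop (𝓝 (f a i - g * d l a i)) :=
    tendsto_const_nhds.sub (hd.const_mul g)
  have h3 : liminf (fun k => f (x k) i) atTop ≤
      liminf (fun k => f a i - g * d (x k) a i) atTop := by
    apply liminf_le_liminf
    · exact Eventually.of_forall fun k => by
        have := hx k i
        linarith
    · exact isBoundedUnder_of ⟨c i, fun k => hc (x k) i⟩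
    · exact h2.isBoundedUnder_le.isCoboundedUnder_ge
  rw [h2.liminf_eq] at h3
  linarith

theorem strong_ekeland_vector {X : Type*} {n : ℕ} (hn : 0 < n)
    (B : Matrix (Fin n) (Fin n) ℝ) (d : X → X → Fin n → ℝ)
    (hmet : IsVectorBMetric B d) (hcomp : VComplete d)
    (hdcont : VContinuousD d)
    (f : X → Fin n → ℝ) (hlsc : VLSC d f)
    (hbdd : ∃ c : Fin n → ℝ, ∀ x : X, c ≤ f x)
    (hH : CondH d f)
    (ε δ : ℝ) (hε : 0 < ε) (hδ : 0 < δ)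
    (x₀ : X) (hx₀ : ∀ x : X, ∀ i, f x₀ i ≤ f x i + ε) :
    ∃ (x : ℕ → X) (xs : X),
      VConv d x xs ∧
      f xs ≤ f x₀ ∧
      (∀ i, d xs x₀ i ≤ δ) ∧
      (∀ y : X,
        (∀ k : ℕ, f y + (ε / δ) • d y (x k) ≤ f xs + (ε / δ) • d xs (x k)) →
        y = xs) ∧
      (∀ y : X,
        (∀ k : ℕ, f y + (ε / δ) • B.mulVec (d xs y)
            + (ε / δ) • (B - 1).mulVec (d xs (x k)) ≤ f xs) →
        y = xs) := by
  have hd0 : ∀ u i, d u u i = 0 := fun u i => by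
    rw [(hmet.2.1 u u).2 rfl]; rfl
  have hnn : ∀ u v i, 0 ≤ d u v i := fun u v i => hmet.1 u v i
  have hsymm : ∀ u v, d u v = d v u := hmet.2.2.1
  set g := ε / δ with hg
  have hgpos : 0 < g := div_pos hε hδ
  let S := {p : Set X × X // VClosed d p.1 ∧ p.2 ∈ p.1}
  have step : ∀ (k : ℕ) (s : S), ∃ t : S,
      t.1.1 = s.1.1 ∩ {y | ∀ i, f y i + g * d y s.1.2 i ≤ f s.1.2 i} ∧
      ∀ y ∈ t.1.1, ∀ i, f t.1.2 i ≤ f y i + 1 / ((k : ℝ) + 1) := by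
    rintro k ⟨⟨F, a⟩, hF, ha⟩
    have hcl : VClosed d (F ∩ {y | ∀ i, f y i + g * d y a i ≤ f a i}) := by
      intro x hx l hl
      exact ⟨hF x (fun k => (hx k).1) l hl,
        slice_closed B d hmet hdcont f hlsc hbdd g a x (fun k => (hx k).2) l hl⟩
    obtain ⟨z, hz, hz'⟩ := hH (F ∩ {y | ∀ i, f y i + g * d y a i ≤ f a i})
      ⟨a, ha, fun i => by simp [hd0]⟩ hcl (1 / ((k : ℝ) + 1)) (by positivity)
    exact ⟨⟨(_, z), hcl, hz⟩, rfl, hz'⟩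
  choose nxt hn1 hn2 using step
  let s : ℕ → S := fun k => Nat.rec ⟨(Set.univ, x₀), fun _ _ _ _ => trivial, trivial⟩ nxt k
  let F : ℕ → Set X := fun k => (s k).1.1
  let x : ℕ → X := fun k => (s k).1.2
  have hF : ∀ k, F (k+1) = F k ∩ {y | ∀ i, f y i + g * d y (x k) i ≤ f (x k) i} :=
    fun k => hn1 k (s k)
  have hmin : ∀ k, ∀ y ∈ F (k+1), ∀ i, f (x (k+1)) i ≤ f y i + 1 / ((k : ℝ) + 1) :=
    fun k => hn2 k (s k)
  have hFc : ∀ k, VClosed d (F k) := fun k => (s k).2.1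
  have hxF : ∀ k, x k ∈ F k := fun k => (s k).2.2
  have hx0 : x 0 = x₀ := rfl
  have hF0 : F 0 = Set.univ := rfl
  clear_value s
  have hanti : Antitone F := antitone_nat_of_succ_le fun k => by
    rw [hF k]; exact Set.inter_subset_left
  have hmem : ∀ k, ∀ y ∈ F (k+1), ∀ i, f y i + g * d y (x k) i ≤ f (x k) i := by
    intro k y hy
    rw [hF k] at hy
    exact hy.2
  have hbound : ∀ k, ∀ y ∈ F (k+2), ∀ i, d y (x (k+1)) i ≤ 1 / ((k : ℝ) + 1) / g := by
    intro k y hy i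
    have h1 := hmem (k+1) y hy i
    have h2 := hmin k y (hanti (Nat.le_succ _) hy) i
    rw [le_div_iff₀ hgpos]
    linarith
  have hlim : Tendsto (fun k : ℕ => 1 / ((k : ℝ) + 1) / g) atTop (𝓝 0) := by
    simpa using (tendsto_one_div_add_atTop_nhds_zero_nat (𝕜 := ℝ)).div_const g
  have hconvall : ∀ y, (∀ k, y ∈ F k) → VConv d x y := by
    intro y hy
    unfold VConv
    rw [← tendsto_add_atTop_iff_nat 1, tendsto_pi_nhds]
    intro i
    refine squeeze_zero (fun k => hnn _ _ i) (fun k => ?_) hlim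
    rw [hsymm]
    exact hbound k y (hy _) i
  have hlt : ∀ N p q : ℕ, N + 1 ≤ q → q < p → ∀ i, d (x p) (x q) i ≤ 1 / ((N : ℝ) + 1) / g := by
    intro N p q hq hp i
    obtain ⟨j, rfl⟩ : ∃ j, q = j + 1 := ⟨q - 1, by omega⟩
    have h1 := hbound j (x p) (hanti (show j + 2 ≤ p by omega) (hxF p)) i
    refine h1.trans ?_
    have : (N : ℝ) ≤ j := by exact_mod_cast (show N ≤ j by omega)
    gcongr
  have hcau : VCauchy d x := by
    unfold VCauchy
    rw [tendsto_pi_nhds]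
    intro i
    rw [Metric.tendsto_atTop]
    intro η hη
    obtain ⟨N, hN⟩ := (hlim.eventually (gt_mem_nhds hη)).exists
    refine ⟨(N+1, N+1), ?_⟩
    rintro ⟨p, q⟩ hpq
    obtain ⟨hp, hq⟩ := Prod.mk_le_mk.1 hpq
    simp only [Pi.zero_apply, Real.dist_eq, sub_zero, abs_of_nonneg (hnn _ _ _)]
    rcases lt_trichotomy p q with h | h | h
    · rw [hsymm]; exact (hlt N q p hp h i).trans_lt hN
    · rw [h, hd0]; exact hη
    · exact (hlt N p q hq h i).trans_lt hN
  obtain ⟨xs, hxs⟩ := hcomp x hcau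
  have hxsF : ∀ k, xs ∈ F k := by
    intro k
    refine hFc k (fun m => x (m + k)) (fun m => hanti (Nat.le_add_left k m) (hxF _)) xs ?_
    exact (tendsto_add_atTop_iff_nat k).2 hxs
  have huniq : ∀ y, (∀ k, y ∈ F k) → y = xs := by
    intro y hy
    have h1 := hdcont x x y xs (hconvall y hy) hxs
    have h2 : (fun k => d (x k) (x k)) = fun _ => 0 := funext fun k => (hmet.2.1 _ _).2 rfl
    rw [h2] at h1
    exact (hmet.2.1 _ _).1 (tendsto_nhds_unique h1 tendsto_const_nhds)
  have h4 : ∀ y : X,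
        (∀ k : ℕ, f y + g • d y (x k) ≤ f xs + g • d xs (x k)) → y = xs := by
    intro y hy
    apply huniq
    intro k
    induction k with
    | zero => rw [hF0]; trivial
    | succ k ih =>
      rw [hF k]
      refine ⟨ih, fun i => ?_⟩
      have h1 := hy k i
      simp only [Pi.add_apply, Pi.smul_apply, smul_eq_mul] at h1
      exact h1.trans (hmem k xs (hxsF _) i)
  have h0 := hmem 0 xs (hxsF 1)
  rw [hx0] at h0
  refine ⟨x, xs, hxs, fun i => ?_, fun i => ?_, h4, fun y hy => h4 y fun k i => ?_⟩
  · have := mul_nonneg hgpos.le (hnn xs x₀ i)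
    have := h0 i
    linarith
  · have h1 := h0 i
    have h2 := hx₀ xs i
    have h3 : g * d xs x₀ i ≤ g * δ := by
      rw [hg, div_mul_cancel₀ _ hδ.ne', ← hg]; linarith
    exact le_of_mul_le_mul_left h3 hgpos
  · have h1 := hy k i
    have h2 := hmet.2.2.2 y xs (x k) i
    rw [hsymm y xs, Matrix.mulVec_add] at h2
    rw [Matrix.sub_mulVec, Matrix.one_mulVec] at h1
    simp only [Pi.add_apply, Pi.sub_apply, Pi.smul_apply, smul_eq_mul] at h1 h2 ⊢
    have h3 := mul_le_mul_of_nonneg_left h2 hgpos.le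
    linarith
end

section
/- (Weak Ekeland variational principle in b-metric spaces.) Let (X,ρ) be a complete b-metric space (b ≥ 1) such that ρ is continuous, and let f : X → ℝ be a lower semicontinuous function bounded from below. Then for every x₀ ∈ X there exist a sequence (x_k) ⊂ X and a point x* ∈ X such that: x_k → x* as k → ∞; f(x*) ≤ f(x₀) − ρ(x*, x₀); for each x ∈ X with x ≠ x* there exists an index k = k(x) with f(x*) + ρ(x*, x_k) < f(x) + ρ(x, x_k); and moreover, for each x ∈ X with x ≠ x* there exists an index k = k(x) with f(x*) < f(x) + b ρ(x*, x) + (b − 1) ρ(x*, x_k). -/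
open Filter Topology

/-- `ρ` is a `b`-metric on `X`. -/
def IsBMetric {X : Type*} (b : ℝ) (ρ : X → X → ℝ) : Prop :=
  (∀ x y, 0 ≤ ρ x y) ∧ (∀ x y, ρ x y = 0 ↔ x = y) ∧
  (∀ x y, ρ x y = ρ y x) ∧
  (∀ x y z, ρ x z ≤ b * (ρ x y + ρ y z))

/-- Convergence of a sequence with respect to `ρ`. -/
def BConv {X : Type*} (ρ : X → X → ℝ) (x : ℕ → X) (l : X) : Prop :=
  Filter.Tendsto (fun k => ρ (x k) l) Filter.atTop (nhds 0)

/-- Cauchy sequence with respect to `ρ`. -/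
def BCauchy {X : Type*} (ρ : X → X → ℝ) (x : ℕ → X) : Prop :=
  Filter.Tendsto (fun p : ℕ × ℕ => ρ (x p.1) (x p.2)) Filter.atTop (nhds 0)

/-- Completeness: every Cauchy sequence converges. -/
def BComplete {X : Type*} (ρ : X → X → ℝ) : Prop :=
  ∀ x : ℕ → X, BCauchy ρ x → ∃ l, BConv ρ x l

/-- The `b`-metric `ρ` is continuous. -/
def BContinuousRho {X : Type*} (ρ : X → X → ℝ) : Prop :=
  ∀ (x y : ℕ → X) (a c : X), BConv ρ x a → BConv ρ y c →
    Filter.Tendsto (fun k => ρ (x k) (y k)) Filter.atTop (nhds (ρ a c))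

/-- `f` is (sequentially) lower semicontinuous w.r.t. `ρ`. -/
def BLSC {X : Type*} (ρ : X → X → ℝ) (f : X → ℝ) : Prop :=
  ∀ (x : ℕ → X) (l : X), BConv ρ x l →
    f l ≤ Filter.liminf (fun k => f (x k)) Filter.atTop

theorem exists_near_min {X : Type*} (f : X → ℝ) (c : ℝ) (hc : ∀ x, c ≤ f x) (S : Set X)
    (a : X) (ha : a ∈ S) (ε : ℝ) (hε : 0 < ε) : ∃ x ∈ S, ∀ z ∈ S, f x ≤ f z + ε := by
  have hne : (f '' S).Nonempty := ⟨f a, a, ha, rfl⟩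
  have hbd : BddBelow (f '' S) := ⟨c, by rintro _ ⟨x, _, rfl⟩; exact hc x⟩
  obtain ⟨_, ⟨x, hx, rfl⟩, hlt⟩ := exists_lt_of_csInf_lt hne
    (show sInf (f '' S) < sInf (f '' S) + ε by linarith)
  refine ⟨x, hx, fun z hz => ?_⟩
  have := csInf_le hbd ⟨z, hz, rfl⟩
  linarith

theorem weak_ekeland_bmetric {X : Type*}
    (b : ℝ) (hb : 1 ≤ b) (ρ : X → X → ℝ)
    (hmet : IsBMetric b ρ) (hcomp : BComplete ρ)
    (hρcont : BContinuousRho ρ)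
    (f : X → ℝ) (hlsc : BLSC ρ f)
    (hbdd : ∃ c : ℝ, ∀ x : X, c ≤ f x)
    (x₀ : X) :
    ∃ (x : ℕ → X) (xs : X),
      BConv ρ x xs ∧
      f xs ≤ f x₀ - ρ xs x₀ ∧
      (∀ y : X, y ≠ xs → ∃ k : ℕ, f xs + ρ xs (x k) < f y + ρ y (x k)) ∧
      (∀ y : X, y ≠ xs →
        ∃ k : ℕ, f xs < f y + b * ρ xs y + (b - 1) * ρ xs (x k)) := by
  obtain ⟨hnn, h0, hsymm, htri⟩ := hmet
  obtain ⟨c, hc⟩ := hbdd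
  have hrr : ∀ x, ρ x x = 0 := fun x => (h0 x x).2 rfl
  have hε : ∀ n : ℕ, (0 : ℝ) < (1 / 2) ^ n := fun n => by positivity
  have hstep : ∀ (n : ℕ) (p : {p : Set X × X // p.2 ∈ p.1}),
      ∃ q : {p : Set X × X // p.2 ∈ p.1},
        q.1.1 = p.1.1 ∩ {y | f y + ρ y p.1.2 ≤ f p.1.2} ∧
        ∀ z ∈ q.1.1, f q.1.2 ≤ f z + (1 / 2) ^ n := by
    intro n p
    obtain ⟨x, hx, hx'⟩ := exists_near_min f c hc (p.1.1 ∩ {y | f y + ρ y p.1.2 ≤ f p.1.2})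
      p.1.2 ⟨p.2, by simp [hrr]⟩ _ (hε n)
    exact ⟨⟨(_, x), hx⟩, rfl, hx'⟩
  choose g hg1 hg2 using hstep
  let P : ℕ → {p : Set X × X // p.2 ∈ p.1} :=
    fun n => Nat.rec ⟨(Set.univ, x₀), trivial⟩ (fun n p => g n p) n
  have hP : ∀ n, P (n + 1) = g n (P n) := fun n => rfl
  let S : ℕ → Set X := fun n => (P n).1.1
  let x : ℕ → X := fun n => (P n).1.2
  have hxS : ∀ n, x n ∈ S n := fun n => (P n).2
  have hS0 : S 0 = Set.univ := rfl
  have hx0 : x 0 = x₀ := rfl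
  have hS : ∀ n, S (n + 1) = S n ∩ {y | f y + ρ y (x n) ≤ f (x n)} := fun n => hg1 n (P n)
  have hmin : ∀ n, ∀ z ∈ S (n + 1), f (x (n + 1)) ≤ f z + (1 / 2) ^ n := fun n => hg2 n (P n)
  clear_value S x
  have hanti : Antitone S := antitone_nat_of_succ_le fun n => by
    rw [hS]; exact Set.inter_subset_left
  have hmem : ∀ n m, n ≤ m → x m ∈ S n := fun n m h => hanti h (hxS m)
  have hle : ∀ n, ∀ z ∈ S (n + 1), f z + ρ z (x n) ≤ f (x n) := fun n z hz => by
    rw [hS] at hz; exact hz.2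
  have hsmall : ∀ n, ∀ z ∈ S (n + 2), ρ z (x (n + 1)) ≤ (1 / 2) ^ n := fun n z hz => by
    have h1 := hle (n + 1) z hz
    have h2 := hmin n z (hanti (Nat.le_succ _) hz)
    linarith
  have hpow : Tendsto (fun n : ℕ => ((1 : ℝ) / 2) ^ n) atTop (𝓝 0) :=
    tendsto_pow_atTop_nhds_zero_of_lt_one (by norm_num) (by norm_num)
  have hcau : BCauchy ρ x := by
    unfold BCauchy
    rw [Metric.tendsto_atTop]
    intro ε he
    have h2 : Tendsto (fun n : ℕ => b * (((1 : ℝ) / 2) ^ n + (1 / 2) ^ n)) atTop (𝓝 0) := by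
      simpa using (hpow.add hpow).const_mul b
    obtain ⟨n, hn⟩ := (h2.eventually (gt_mem_nhds he)).exists
    refine ⟨(n + 2, n + 2), fun p hp => ?_⟩
    rw [Real.dist_eq, sub_zero, abs_of_nonneg (hnn _ _)]
    have h3 := hsmall n _ (hmem (n + 2) p.1 hp.1)
    have h4 := hsmall n _ (hmem (n + 2) p.2 hp.2)
    rw [hsymm] at h4
    have h5 := htri (x p.1) (x (n + 1)) (x p.2)
    have h6 : b * (ρ (x p.1) (x (n + 1)) + ρ (x (n + 1)) (x p.2)) ≤
      b * (((1 : ℝ) / 2) ^ n + (1 / 2) ^ n) :=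
        mul_le_mul_of_nonneg_left (add_le_add h3 h4) (by linarith)
    linarith
  obtain ⟨xs, hxs⟩ := hcomp x hcau
  have hkey : ∀ n, f xs + ρ xs (x n) ≤ f (x n) := by
    intro n
    have ht := hρcont x (fun _ => x n) xs (x n) hxs (by simp [BConv, hrr])
    have ht2 : Tendsto (fun k => f (x n) - ρ (x k) (x n)) atTop (𝓝 (f (x n) - ρ xs (x n))) :=
      ht.const_sub _
    have hl : liminf (fun k => f (x k)) atTop ≤
        liminf (fun k => f (x n) - ρ (x k) (x n)) atTop := by
      refine liminf_le_liminf ?_ ?_ ?_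
      · filter_upwards [eventually_ge_atTop (n + 1)] with k hk
        have := hle n _ (hmem (n + 1) k hk)
        linarith
      · exact isBoundedUnder_of ⟨c, fun k => hc _⟩
      · exact ht2.isBoundedUnder_le.isCoboundedUnder_ge
    rw [ht2.liminf_eq] at hl
    have := hlsc x xs hxs
    linarith
  have h3 : ∀ y : X, y ≠ xs → ∃ k : ℕ, f xs + ρ xs (x k) < f y + ρ y (x k) := by
    intro y hy
    by_contra! hcon
    apply hy
    have hyS : ∀ n, y ∈ S n := by
      intro n
      induction n with
      | zero => rw [hS0]; trivial
      | succ n ih => rw [hS]; exact ⟨ih, (hcon n).trans (hkey n)⟩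
    have hlim : Tendsto (fun n => b * ((1 / 2) ^ n + ρ (x (n + 1)) xs)) atTop (𝓝 0) := by
      have := (hpow.add ((tendsto_add_atTop_iff_nat 1).2 hxs)).const_mul b
      simpa using this
    have hle0 : ρ y xs ≤ 0 := ge_of_tendsto' hlim fun n =>
      (htri y (x (n + 1)) xs).trans (mul_le_mul_of_nonneg_left
        (by have := hsmall n y (hyS _); linarith) (by linarith))
    exact (h0 _ _).1 (le_antisymm hle0 (hnn _ _))
  refine ⟨x, xs, hxs, ?_, h3, fun y hy => ?_⟩
  · have := hkey 0
    rw [hx0] at this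
    linarith
  · obtain ⟨k, hk⟩ := h3 y hy
    refine ⟨k, ?_⟩
    have := htri y xs (x k)
    rw [hsymm y xs] at this
    linarith
end

section
/- (Strong Ekeland variational principle in b-metric spaces.) Let (X,ρ) be a complete b-metric space (b ≥ 1) such that ρ is continuous, and let f : X → ℝ be a lower semicontinuous function bounded from below. Then for given ε, δ > 0 and x₀ ∈ X with f(x₀) ≤ inf_{x∈X} f(x) + ε, there exist a sequence (x_k) ⊂ X and x* ∈ X such that: x_k → x* as k → ∞; f(x*) ≤ f(x₀); ρ(x*, x₀) ≤ δ; for each x ∈ X with x ≠ x* there exists an index k = k(x) with f(x*) + (ε/δ) ρ(x*, x_k) < f(x) + (ε/δ) ρ(x, x_k); and moreover, for each x ∈ X with x ≠ x* there exists an index k = k(x) with f(x*) < f(x) + b (ε/δ) ρ(x*, x) + (b − 1)(ε/δ) ρ(x*, x_k). -/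
open Filter Topology

theorem strong_ekeland_bmetric {X : Type*}
    (b : ℝ) (hb : 1 ≤ b) (ρ : X → X → ℝ)
    (hmet : IsBMetric b ρ) (hcomp : BComplete ρ)
    (hρcont : BContinuousRho ρ)
    (f : X → ℝ) (hlsc : BLSC ρ f)
    (hbdd : ∃ c : ℝ, ∀ x : X, c ≤ f x)
    (ε δ : ℝ) (hε : 0 < ε) (hδ : 0 < δ)
    (x₀ : X) (hx₀ : f x₀ ≤ (⨅ x : X, f x) + ε) :
    ∃ (x : ℕ → X) (xs : X),
      BConv ρ x xs ∧
      f xs ≤ f x₀ ∧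
      ρ xs x₀ ≤ δ ∧
      (∀ y : X, y ≠ xs →
        ∃ k : ℕ, f xs + (ε / δ) * ρ xs (x k) < f y + (ε / δ) * ρ y (x k)) ∧
      (∀ y : X, y ≠ xs →
        ∃ k : ℕ, f xs < f y + b * (ε / δ) * ρ xs y + (b - 1) * (ε / δ) * ρ xs (x k)) := by
  obtain ⟨hnn, hz, hsym, htri⟩ := hmet
  obtain ⟨c, hc⟩ := hbdd
  set l : ℝ := ε / δ with hl
  have hlpos : 0 < l := div_pos hε hδ
  have key : ∀ (n : ℕ) (T : Set X), ∃ x : X, T.Nonempty →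
      x ∈ T ∧ ∀ y ∈ T, f x ≤ f y + 1 / ((n : ℝ) + 1) := by
    intro n T
    by_cases hT : T.Nonempty
    · have hbb : BddBelow (f '' T) := ⟨c, by rintro _ ⟨x, _, rfl⟩; exact hc x⟩
      have hpos : (0 : ℝ) < 1 / ((n : ℝ) + 1) := by positivity
      obtain ⟨_, ⟨x, hx, rfl⟩, hlt⟩ := Real.lt_sInf_add_pos (hT.image f) hpos
      refine ⟨x, fun _ => ⟨hx, fun y hy => ?_⟩⟩
      have := csInf_le hbb (Set.mem_image_of_mem f hy)
      linarith
    · exact ⟨x₀, fun h => absurd h hT⟩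
  choose g hg using key
  let S : X → Set X := fun x => {y | f y + l * ρ y x ≤ f x}
  let s : ℕ → Set X × X := fun n => Nat.rec (Set.univ, x₀)
    (fun n p => (p.1 ∩ S p.2, g n (p.1 ∩ S p.2))) n
  have hs1 : ∀ n, (s (n + 1)).1 = (s n).1 ∩ S (s n).2 := fun n => rfl
  have hs2 : ∀ n, (s (n + 1)).2 = g n ((s n).1 ∩ S (s n).2) := fun n => rfl
  have hself : ∀ x, x ∈ S x := by
    intro x
    have : ρ x x = 0 := (hz x x).2 rfl
    simp [S, this]
  have hmem : ∀ n, (s n).2 ∈ (s n).1 := by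
    intro n
    induction n with
    | zero => exact Set.mem_univ _
    | succ n ih =>
      rw [hs1, hs2]
      exact (hg n ((s n).1 ∩ S (s n).2) ⟨_, ih, hself _⟩).1
  have hmin : ∀ n, ∀ y ∈ (s (n + 1)).1, f (s (n + 1)).2 ≤ f y + 1 / ((n : ℝ) + 1) := by
    intro n y hy
    rw [hs2]
    exact (hg n ((s n).1 ∩ S (s n).2) ⟨_, hmem n, hself _⟩).2 y hy
  have hanti : Antitone (fun n => (s n).1) :=
    antitone_nat_of_succ_le fun n => by
      change (s (n + 1)).1 ⊆ (s n).1
      rw [hs1]; exact Set.inter_subset_left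
  let x : ℕ → X := fun n => (s n).2
  have hxS : ∀ k p, k ≤ p → x p ∈ S (x k) := by
    intro k p h
    rcases h.eq_or_lt with rfl | h
    · exact hself _
    · have h1 : x p ∈ (s (k + 1)).1 := hanti (Nat.succ_le_of_lt h) (hmem p)
      rw [hs1] at h1
      exact h1.2
  have hinter : ∀ y, (∀ k, y ∈ S (x k)) → ∀ k, y ∈ (s k).1 := by
    intro y hy k
    induction k with
    | zero => exact Set.mem_univ _
    | succ k ih => rw [hs1]; exact ⟨ih, hy k⟩
  have hsmall : ∀ k, ∀ y ∈ (s (k + 1)).1, y ∈ S (x (k + 1)) →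
      ρ y (x (k + 1)) ≤ 1 / ((k : ℝ) + 1) / l := by
    intro k y hy hyS
    have h1 := hmin k y hy
    have h2 : f y + l * ρ y (x (k + 1)) ≤ f (x (k + 1)) := hyS
    rw [le_div_iff₀ hlpos]
    change f (x (k + 1)) ≤ _ at h1
    linarith
  have htend : Tendsto (fun k : ℕ => 1 / ((k : ℝ) + 1) / l) atTop (𝓝 0) := by
    simpa using (tendsto_one_div_add_atTop_nhds_zero_nat (𝕜 := ℝ)).div_const l
  have hcau : BCauchy ρ x := by
    unfold BCauchy
    rw [Metric.tendsto_atTop]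
    intro e he
    obtain ⟨N, hN⟩ := (htend.eventually (gt_mem_nhds he)).exists_forall_of_atTop
    have hlt : ∀ a d, N + 1 ≤ a → a ≤ d → ρ (x d) (x a) < e := by
      intro a d ha hd
      obtain ⟨k, rfl⟩ : ∃ k, a = k + 1 := ⟨a - 1, by omega⟩
      exact (hsmall k (x d) (hanti hd (hmem d)) (hxS _ _ hd)).trans_lt (hN k (by omega))
    refine ⟨(N + 1, N + 1), ?_⟩
    rintro ⟨p, q⟩ ⟨hp, hq⟩
    rw [Real.dist_eq, sub_zero, abs_of_nonneg (hnn _ _)]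
    rcases le_total p q with h | h
    · rw [hsym]; exact hlt p q hp h
    · exact hlt q p hq h
  obtain ⟨xs, hxs⟩ := hcomp x hcau
  have hconst : ∀ a, BConv ρ (fun _ => a) a := by
    intro a
    have : ρ a a = 0 := (hz a a).2 rfl
    simp [BConv, this]
  have hxsS : ∀ k, f xs + l * ρ xs (x k) ≤ f (x k) := by
    intro k
    have h1 := hρcont x (fun _ => x k) xs (x k) hxs (hconst _)
    have h2 : Tendsto (fun p => f (x k) - l * ρ (x p) (x k)) atTop
        (𝓝 (f (x k) - l * ρ xs (x k))) := (h1.const_mul l).const_sub _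
    have h3 : f xs ≤ f (x k) - l * ρ xs (x k) := by
      refine le_of_forall_gt_imp_ge_of_dense fun d hd => ?_
      refine (hlsc x xs hxs).trans ?_
      refine liminf_le_of_frequently_le (Eventually.frequently ?_)
        (isBoundedUnder_of ⟨c, fun n => hc _⟩)
      filter_upwards [h2.eventually (gt_mem_nhds hd), eventually_ge_atTop k] with p hp hkp
      have : f (x p) + l * ρ (x p) (x k) ≤ f (x k) := hxS k p hkp
      linarith
    linarith
  have huniq : ∀ y, (∀ k, y ∈ S (x k)) → y = xs := by
    intro y hy
    have h1 : Tendsto (fun k => ρ y (x (k + 1))) atTop (𝓝 0) :=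
      squeeze_zero (fun _ => hnn _ _)
        (fun k => hsmall k y (hinter y hy (k + 1)) (hy (k + 1))) htend
    have h2 : Tendsto (fun k => ρ (x (k + 1)) xs) atTop (𝓝 0) :=
      (tendsto_add_atTop_iff_nat 1).2 hxs
    have h3 : Tendsto (fun k => b * (ρ y (x (k + 1)) + ρ (x (k + 1)) xs)) atTop (𝓝 0) := by
      simpa using (h1.add h2).const_mul b
    have h4 : ρ y xs ≤ 0 := ge_of_tendsto' h3 fun k => htri _ _ _
    exact (hz _ _).1 (le_antisymm h4 (hnn _ _))
  have hx0 : f xs + l * ρ xs x₀ ≤ f x₀ := hxsS 0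
  have h4 : ∀ y : X, y ≠ xs → ∃ k : ℕ, f xs + l * ρ xs (x k) < f y + l * ρ y (x k) := by
    intro y hy
    by_contra hcon
    push Not at hcon
    exact hy (huniq y fun k => (hcon k).trans (hxsS k))
  refine ⟨x, xs, hxs, ?_, ?_, h4, ?_⟩
  · have := mul_nonneg hlpos.le (hnn xs x₀)
    linarith
  · have h1 : (⨅ x : X, f x) ≤ f xs := ciInf_le ⟨c, by rintro _ ⟨x, rfl⟩; exact hc x⟩ xs
    have h2 : l * ρ xs x₀ ≤ l * δ := by
      have : l * δ = ε := div_mul_cancel₀ _ hδ.ne'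
      linarith
    exact le_of_mul_le_mul_left h2 hlpos
  · intro y hy
    obtain ⟨k, hk⟩ := h4 y hy
    refine ⟨k, ?_⟩
    have h1 := mul_le_mul_of_nonneg_left (htri y xs (x k)) hlpos.le
    rw [hsym y xs] at h1
    linarith
end

section
/- Let d = (d₁,…,d_n) be a vector B-metric on a set X with a positive matrix B = (b_ij). Then: ρ₁(x,y) := Σ_{i=1}^n d_i(x,y) is a b₁-metric on X with b₁ := Σ_{i=1}^n max_{1≤j≤n} b_ij; ρ_∞(x,y) := max_{1≤i≤n} d_i(x,y) is a b_∞-metric on X with b_∞ := max_{1≤i≤n} Σ_{j=1}^n b_ij; and ρ₂(x,y) := (Σ_{i=1}^n d_i(x,y)²)^{1/2} is a b₂-metric on X with b₂ := (Σ_{i,j=1}^n b_ij²)^{1/2}. -/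
open Filter Matrix Topology

theorem scalar_bmetrics_from_vector {X : Type*} {n : ℕ} (hn : 0 < n)
    (B : Matrix (Fin n) (Fin n) ℝ) (d : X → X → Fin n → ℝ)
    (hmet : IsVectorBMetric B d) (hB : MatPos B) :
    IsBMetric (∑ i, ⨆ j, B i j) (fun x y => ∑ i, d x y i) ∧
    IsBMetric (⨆ i, ∑ j, B i j) (fun x y => ⨆ i, d x y i) ∧
    IsBMetric (Real.sqrt (∑ i, ∑ j, (B i j) ^ 2))
      (fun x y => Real.sqrt (∑ i, (d x y i) ^ 2)) := by
  obtain ⟨h0, hz, hs, ht⟩ := hmet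
  have : Nonempty (Fin n) := ⟨⟨0, hn⟩⟩
  have h0' : ∀ u v i, 0 ≤ d u v i := fun u v i => h0 u v i
  have bdd : ∀ f : Fin n → ℝ, BddAbove (Set.range f) := fun f => (Set.finite_range f).bddAbove
  have ht' : ∀ u v w i, d u w i ≤ ∑ j, B i j * (d u v j + d v w j) := fun u v w i => ht u v w i
  have hz' : ∀ u v, (∀ i, d u v i = 0) ↔ u = v := by
    intro u v
    rw [← hz u v, funext_iff]
    rfl
  refine ⟨⟨?_, ?_, ?_, ?_⟩, ⟨?_, ?_, ?_, ?_⟩, ⟨?_, ?_, ?_, ?_⟩⟩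
  · intro x y
    exact Finset.sum_nonneg fun i _ => h0' x y i
  · intro x y
    rw [← hz' x y]
    simp [Finset.sum_eq_zero_iff_of_nonneg (fun i _ => h0' x y i)]
  · intro x y
    simp only [hs x y]
  · intro x y z
    simp only
    rw [← Finset.sum_add_distrib, Finset.sum_mul]
    refine Finset.sum_le_sum fun i _ => (ht' x y z i).trans ?_
    rw [Finset.mul_sum]
    exact Finset.sum_le_sum fun j _ => mul_le_mul_of_nonneg_right (le_ciSup (bdd (B i)) j)
      (add_nonneg (h0' _ _ _) (h0' _ _ _))
  · intro x y
    exact Real.iSup_nonneg (h0' x y)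
  · intro x y
    rw [← hz' x y]
    constructor
    · intro h i
      exact le_antisymm ((le_ciSup (bdd (d x y)) i).trans h.le) (h0' x y i)
    · intro h
      simp [h]
  · intro x y
    simp only [hs x y]
  · intro x y z
    refine ciSup_le fun i => (ht' x y z i).trans ?_
    have hnn : 0 ≤ (⨆ i, d x y i) + ⨆ i, d y z i :=
      add_nonneg (Real.iSup_nonneg (h0' x y)) (Real.iSup_nonneg (h0' y z))
    calc ∑ j, B i j * (d x y j + d y z j)
        ≤ ∑ j, B i j * ((⨆ i, d x y i) + ⨆ i, d y z i) :=
          Finset.sum_le_sum fun j _ => mul_le_mul_of_nonneg_left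
            (add_le_add (le_ciSup (bdd (d x y)) j) (le_ciSup (bdd (d y z)) j)) (hB i j)
      _ = (∑ j, B i j) * ((⨆ i, d x y i) + ⨆ i, d y z i) := by rw [Finset.sum_mul]
      _ ≤ _ := mul_le_mul_of_nonneg_right (le_ciSup (bdd fun i => ∑ j, B i j) i) hnn
  · intro x y
    exact Real.sqrt_nonneg _
  · intro x y
    rw [← hz' x y]
    simp only
    rw [Real.sqrt_eq_zero (Finset.sum_nonneg fun i _ => sq_nonneg _),
      Finset.sum_eq_zero_iff_of_nonneg (fun i _ => sq_nonneg _)]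
    simp
  · intro x y
    simp only [hs x y]
  · intro x y z
    have mink : Real.sqrt (∑ j, (d x y j + d y z j) ^ 2) ≤
        Real.sqrt (∑ j, (d x y j) ^ 2) + Real.sqrt (∑ j, (d y z j) ^ 2) := by
      have h := norm_add_le (WithLp.toLp 2 (d x y) : EuclideanSpace ℝ (Fin n))
        (WithLp.toLp 2 (d y z))
      simpa [EuclideanSpace.norm_eq] using h
    refine le_trans ?_ (mul_le_mul_of_nonneg_left mink (Real.sqrt_nonneg _))
    have hnn : 0 ≤ ∑ i, ∑ j, (B i j) ^ 2 :=
      Finset.sum_nonneg fun i _ => Finset.sum_nonneg fun j _ => sq_nonneg _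
    have key : ∑ i, (d x z i) ^ 2 ≤
        (∑ i, ∑ j, (B i j) ^ 2) * ∑ j, (d x y j + d y z j) ^ 2 := by
      rw [Finset.sum_mul]
      refine Finset.sum_le_sum fun i _ => ?_
      exact (pow_le_pow_left₀ (h0' x z i) (ht' x y z i) 2).trans
        (Finset.sum_mul_sq_le_sq_mul_sq _ _ _)
    exact (Real.sqrt_le_sqrt key).trans (Real.sqrt_mul hnn _).le
end
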